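/- arXiv:2304.13228 — 4 statements merged into one kernel-verified Lean document; each statement's English description precedes it below -/
import Mathlib

section
/- Let G = (V,E) be a finite simple connected graph with minimum degree at least 2 and |V| ≥ 4, and let M ⊆ E be a triangle-free 2-matching of G. Then there exists a triangle-free 2-edge-cover C ⊆ E of G with |C| ≤ 2|V| − |M|. -/
namespace ECSS

variable {V : Type*}

/-- The spanning subgraph of the vertex type `V` determined by an edge set `F`,
viewed as a simple graph on `V`. -/
def graphOf (F : Finset (Sym2 V)) : SimpleGraph V :=
  SimpleGraph.fromEdgeSet (F : Set (Sym2 V))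

/-- `d_F(v)`: the number of edges of the edge set `F` incident to the vertex `v`. -/
noncomputable def degIn (F : Finset (Sym2 V)) (v : V) : ℕ :=
  {e ∈ (F : Set (Sym2 V)) | v ∈ e}.ncard

/-- `F` is a 2-matching: every vertex is incident to at most 2 edges of `F`. -/
def IsTwoMatching (F : Finset (Sym2 V)) : Prop :=
  ∀ v : V, degIn F v ≤ 2

/-- `F` is a 2-edge-cover: every vertex is incident to at least 2 edges of `F`. -/
def IsTwoEdgeCover (F : Finset (Sym2 V)) : Prop :=
  ∀ v : V, 2 ≤ degIn F v

/-- The vertices `u, v, w` form a triangle 2EC component of the edge set `F`: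
they are pairwise distinct, the three edges joining them all belong to `F`, and no
other edge of `F` is incident to any of them (so `{u, v, w}` is a connected
component of `(V, F)` which is a cycle of length 3). -/
def IsTriangleComponent (F : Finset (Sym2 V)) (u v w : V) : Prop :=
  u ≠ v ∧ u ≠ w ∧ v ≠ w ∧
  s(u, v) ∈ F ∧ s(u, w) ∈ F ∧ s(v, w) ∈ F ∧
  ∀ e ∈ F, (u ∈ e ∨ v ∈ e ∨ w ∈ e) → e = s(u, v) ∨ e = s(u, w) ∨ e = s(v, w)

/-- An edge set `F` is triangle-free if it has no triangle 2EC component. -/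
def TriangleFree (F : Finset (Sym2 V)) : Prop :=
  ¬ ∃ u v w : V, IsTriangleComponent F u v w

/-- A graph is 2-edge-connected if it has at least two vertices and remains
connected after deleting any single edge. -/
def TwoEdgeConnected {α : Type*} (G : SimpleGraph α) : Prop :=
  2 ≤ Nat.card α ∧ G.Connected ∧ ∀ e ∈ G.edgeSet, (G.deleteEdges {e}).Connected

/-- A graph is a cycle if it is connected and every vertex has degree exactly 2. -/
def IsCycleGraph {α : Type*} (G : SimpleGraph α) : Prop :=
  G.Connected ∧ ∀ v : α, (G.neighborSet v).ncard = 2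

open Classical in
theorem degIn_insert (D : Finset (Sym2 V)) (e : Sym2 V) (he : e ∉ D) (v : V) :
    degIn (insert e D) v = degIn D v + if v ∈ e then 1 else 0 := by
  have key : ∀ F : Finset (Sym2 V), degIn F v = (F.filter (fun e => v ∈ e)).card := by
    intro F
    unfold degIn
    rw [← Set.ncard_coe_finset]
    congr 1
    ext e
    simp
  rw [key, key, Finset.filter_insert]
  split_ifs with h
  · rw [Finset.card_insert_of_notMem (by simp [he])]
  · simp

def TC (F : Finset (Sym2 V)) (s : Set V) : Prop :=
  ∃ u v w, s = {u, v, w} ∧ IsTriangleComponent F u v w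

theorem TC.mem_iff {F : Finset (Sym2 V)} {s : Set V} (h : TC F s) {a b : V} (ha : a ∈ s) :
    b ∈ s ↔ b = a ∨ s(a, b) ∈ F := by
  obtain ⟨u, v, w, rfl, h1, h2, h3, h4, h5, h6, h7⟩ := h
  have h4' : s(v, u) ∈ F := by rwa [Sym2.eq_swap]
  have h5' : s(w, u) ∈ F := by rwa [Sym2.eq_swap]
  have h6' : s(w, v) ∈ F := by rwa [Sym2.eq_swap]
  constructor
  · intro hb
    simp only [Set.mem_insert_iff, Set.mem_singleton_iff] at ha hb
    rcases ha with rfl | rfl | rfl <;> rcases hb with rfl | rfl | rfl <;> tauto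
  · rintro (rfl | hb)
    · exact ha
    · have := h7 _ hb (by
        simp only [Set.mem_insert_iff, Set.mem_singleton_iff] at ha
        rcases ha with rfl | rfl | rfl <;> simp)
      simp only [Set.mem_insert_iff, Set.mem_singleton_iff, Sym2.eq_iff] at this ⊢
      tauto

theorem TC.uniq {F : Finset (Sym2 V)} {s t : Set V} (h : TC F s) (h' : TC F t) {a : V}
    (ha : a ∈ s) (ha' : a ∈ t) : s = t := by
  ext b
  rw [h.mem_iff ha, h'.mem_iff ha']

theorem TC.deg {F : Finset (Sym2 V)} {s : Set V} (h : TC F s) {a : V} (ha : a ∈ s) :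
    degIn F a = 2 := by
  obtain ⟨u, v, w, rfl, h1, h2, h3, h4, h5, h6, h7⟩ := h
  have key : ∀ x y z : V, x ≠ y → x ≠ z → y ≠ z → s(x, y) ∈ F → s(x, z) ∈ F →
      (∀ e ∈ F, x ∈ e → e = s(x, y) ∨ e = s(x, z)) → degIn F x = 2 := by
    intro x y z hxy hxz hyz hy hz hall
    unfold degIn
    have : {e ∈ (F : Set (Sym2 V)) | x ∈ e} = {s(x, y), s(x, z)} := by
      ext e
      simp only [Set.mem_ofPred_eq, Set.mem_insert_iff, Set.mem_singleton_iff, Finset.mem_coe]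
      constructor
      · rintro ⟨he, hx⟩
        exact hall e he hx
      · rintro (rfl | rfl) <;> simp [*]
    rw [this, Set.ncard_pair]
    rw [Ne, Sym2.eq_iff]
    tauto
  simp only [Set.mem_insert_iff, Set.mem_singleton_iff] at ha
  rcases ha with rfl | rfl | rfl
  · refine key a v w h1 h2 h3 h4 h5 fun e he hx => ?_
    rcases h7 e he (by tauto) with rfl | rfl | rfl
    · simp
    · simp
    · rw [Sym2.mem_iff] at hx; tauto
  · refine key a u w h1.symm h3 h2 (by rwa [Sym2.eq_swap]) h6 fun e he hx => ?_
    rcases h7 e he (by tauto) with rfl | rfl | rfl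
    · left; exact Sym2.eq_swap
    · rw [Sym2.mem_iff] at hx; tauto
    · simp
  · refine key a u v h2.symm h3.symm h1 (by rwa [Sym2.eq_swap]) (by rwa [Sym2.eq_swap])
      fun e he hx => ?_
    rcases h7 e he (by tauto) with rfl | rfl | rfl
    · rw [Sym2.mem_iff] at hx; tauto
    · left; exact Sym2.eq_swap
    · right; exact Sym2.eq_swap

open Classical in
theorem TC.restrict {D : Finset (Sym2 V)} {a b : V} {s : Set V} (h : TC (insert s(a, b) D) s)
    (ha : a ∉ s) : TC D s := by
  have hb : b ∉ s := fun hb => ha ((h.mem_iff hb).2 (Or.inr (by simp [Sym2.eq_swap])))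
  obtain ⟨u, v, w, rfl, h1, h2, h3, h4, h5, h6, h7⟩ := h
  simp only [Set.mem_insert_iff, Set.mem_singleton_iff, not_or] at ha hb
  have aux : ∀ x y, x ≠ a → x ≠ b → s(x, y) ∈ insert s(a, b) D → s(x, y) ∈ D := by
    intro x y hx hy h
    rw [Finset.mem_insert, Sym2.eq_iff] at h
    tauto
  refine ⟨u, v, w, rfl, h1, h2, h3, aux _ _ ?_ ?_ h4, aux _ _ ?_ ?_ h5, aux _ _ ?_ ?_ h6, ?_⟩
  any_goals tauto
  intro e he
  exact h7 e (Finset.mem_insert_of_mem he)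

open Classical in
noncomputable def tcs [Fintype V] (F : Finset (Sym2 V)) : Finset (Set V) :=
  Finset.univ.filter (TC F)

noncomputable def dfc [Fintype V] (F : Finset (Sym2 V)) : ℕ := ∑ v, (2 - degIn F v)

theorem sum_degIn [Fintype V] (F : Finset (Sym2 V)) (hF : ∀ e ∈ F, ¬ e.IsDiag) :
    ∑ v, degIn F v = 2 * F.card := by
  classical
  induction F using Finset.induction_on with
  | empty => simp [degIn]
  | insert e F he ih =>
    simp only [degIn_insert F e he, Finset.sum_add_distrib]
    rw [ih fun e' h => hF e' (Finset.mem_insert_of_mem h), Finset.card_insert_of_notMem he]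
    have : ∑ v, (if v ∈ e then 1 else 0) = 2 := by
      have hd := hF e (Finset.mem_insert_self _ _)
      induction e using Sym2.ind with
      | _ x y =>
        rw [Sym2.mk_isDiag_iff] at hd
        rw [← Finset.card_filter]
        rw [show Finset.univ.filter (fun v => v ∈ s(x, y)) = {x, y} by ext; simp]
        exact Finset.card_pair hd
    omega

open Classical in
/-- Adding an edge at `a` gains at `a`, and also at `b`. -/
theorem dfc_insert [Fintype V] {D : Finset (Sym2 V)} {a b : V} (hab : a ≠ b)
    (he : s(a, b) ∉ D) :
    dfc D = dfc (insert s(a, b) D) + (if degIn D a < 2 then 1 else 0)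
      + (if degIn D b < 2 then 1 else 0) := by
  unfold dfc
  have h1 : ∀ x : V, (if degIn D x < 2 then 1 else 0) =
      ∑ v, if v = x then (if degIn D x < 2 then 1 else 0) else 0 := by
    intro x; simp
  rw [h1 a, h1 b, ← Finset.sum_add_distrib, ← Finset.sum_add_distrib]
  refine Finset.sum_congr rfl fun v _ => ?_
  rw [degIn_insert D _ he]
  simp only [Sym2.mem_iff]
  by_cases h : v = a
  · subst h
    simp only [hab, true_or, if_true, if_false]
    split_ifs <;> omega
  · by_cases h' : v = b
    · subst h'
      simp only [h, or_true, if_true, if_false]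
      split_ifs <;> omega
    · simp [h, h']

/-- If `G` is a finite simple connected graph with minimum degree
at least 2 and at least 4 vertices, and `M ⊆ E(G)` is a triangle-free 2-matching,
then `G` has a triangle-free 2-edge-cover `C ⊆ E(G)` with `|C| ≤ 2|V| - |M|`. -/
theorem triangleFree_twoEdgeCover_of_twoMatching
    {V : Type*} [Fintype V] (G : SimpleGraph V)
    (hconn : G.Connected)
    (hmin : ∀ v : V, 2 ≤ (G.neighborSet v).ncard)
    (hV : 4 ≤ Fintype.card V)
    (M : Finset (Sym2 V)) (hMsub : (M : Set (Sym2 V)) ⊆ G.edgeSet)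
    (hM2 : IsTwoMatching M) (hMtf : TriangleFree M) :
    ∃ C : Finset (Sym2 V), (C : Set (Sym2 V)) ⊆ G.edgeSet ∧
      IsTwoEdgeCover C ∧ TriangleFree C ∧
      C.card ≤ 2 * Fintype.card V - M.card := by
  classical
  have hcast : ∀ e ∈ M, ¬ e.IsDiag := fun e he => G.not_isDiag_of_mem_edgeSet (hMsub he)
  have hMsum := sum_degIn M hcast
  have hMd : dfc M + ∑ v, degIn M v = 2 * Fintype.card V := by
    unfold dfc
    rw [← Finset.sum_add_distrib, Finset.sum_congr rfl (g := fun _ => 2)]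
    · simp [mul_comm]
    · intro v _
      have := hM2 v
      omega
  have hMt : (tcs M).card = 0 := by
    rw [Finset.card_eq_zero, tcs, Finset.filter_eq_empty_iff]
    rintro s - ⟨u, v, w, -, h⟩
    exact hMtf ⟨u, v, w, h⟩
  let S : Finset (Finset (Sym2 V)) := Finset.univ.filter fun D =>
    (D : Set (Sym2 V)) ⊆ G.edgeSet ∧ D.card + dfc D + (tcs D).card ≤ 2 * Fintype.card V - M.card
  have hS : M ∈ S := by
    simp only [S, Finset.mem_filter, Finset.mem_univ, true_and]
    exact ⟨hMsub, by omega⟩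
  obtain ⟨D, hDS, hDmax⟩ := S.exists_max_image Finset.card ⟨M, hS⟩
  have hD := hDS
  simp only [S, Finset.mem_filter, Finset.mem_univ, true_and] at hD
  obtain ⟨hDG, hDc⟩ := hD
  -- no improving edge
  have step : ∀ a b, G.Adj a b → s(a, b) ∉ D →
      dfc D + (tcs D).card < 1 + dfc (insert s(a, b) D) + (tcs (insert s(a, b) D)).card := by
    intro a b hab he
    by_contra hlt
    have hc := Finset.card_insert_of_notMem he
    have hmem : insert s(a, b) D ∈ S := by
      simp only [S, Finset.mem_filter, Finset.mem_univ, true_and]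
      refine ⟨?_, by omega⟩
      rw [Finset.coe_insert]
      exact Set.insert_subset hab hDG
    have := hDmax _ hmem
    omega
  have hcover : IsTwoEdgeCover D := by
    intro a
    by_contra hlt
    push Not at hlt
    obtain ⟨b, hab, he⟩ : ∃ b, G.Adj a b ∧ s(a, b) ∉ D := by
      by_contra hcon
      push Not at hcon
      have h1 : (G.neighborSet a).ncard ≤ degIn D a := by
        unfold degIn
        refine Set.ncard_le_ncard_of_injOn (fun x => s(a, x)) ?_ ?_ (Set.toFinite _)
        · intro x hx
          exact ⟨hcon x hx, by simp⟩
        · intro x _ y _ hxy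
          exact Sym2.congr_right.1 hxy
      have := hmin a
      omega
    have hs := step a b hab he
    have hd := dfc_insert hab.ne he
    rw [if_pos hlt] at hd
    by_cases hsub : tcs (insert s(a, b) D) ⊆ tcs D
    · have := Finset.card_le_card hsub
      omega
    · rw [Finset.not_subset] at hsub
      obtain ⟨s, hs1, hs2⟩ := hsub
      simp only [tcs, Finset.mem_filter, Finset.mem_univ, true_and] at hs1 hs2
      have has : a ∈ s := by
        by_contra has
        exact hs2 (hs1.restrict has)
      have hbs : b ∈ s := (hs1.mem_iff has).2 (Or.inr (by simp))
      have hdb := hs1.deg hbs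
      rw [degIn_insert D _ he] at hdb
      simp only [Sym2.mem_iff, or_true, if_true] at hdb
      rw [if_pos (by omega)] at hd
      have hsub : tcs (insert s(a, b) D) ⊆ insert s (tcs D) := by
        intro t ht
        simp only [tcs, Finset.mem_insert, Finset.mem_filter, Finset.mem_univ, true_and] at ht ⊢
        by_cases hat : a ∈ t
        · left; exact ht.uniq hs1 hat has
        · right; exact ht.restrict hat
      have := (Finset.card_le_card hsub).trans (Finset.card_insert_le _ _)
      omega
  refine ⟨D, hDG, hcover, ?_, by omega⟩
  rintro ⟨u, v, w, huvw⟩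
  have hT : TC D {u, v, w} := ⟨u, v, w, rfl, huvw⟩
  obtain ⟨z, hz⟩ : ∃ z, z ∉ ({u, v, w} : Set V) := by
    by_contra hcon
    push Not at hcon
    have h1 : (Finset.univ : Finset V) ⊆ {u, v, w} := by
      intro x _
      simpa using hcon x
    have h2 := (Finset.card_le_card h1).trans Finset.card_le_three
    rw [Finset.card_univ] at h2
    omega
  obtain ⟨p⟩ := hconn.preconnected u z
  obtain ⟨d, -, hd1, hd2⟩ := p.exists_boundary_dart _ (by simp) hz
  obtain ⟨⟨a, b⟩, hab⟩ := d
  simp only at hd1 hd2 hab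
  have he : s(a, b) ∉ D := fun he => hd2 ((hT.mem_iff hd1).2 (Or.inr he))
  have hs := step a b hab he
  have hd := dfc_insert hab.ne he
  have hsub : tcs (insert s(a, b) D) ⊆ (tcs D).erase {u, v, w} := by
    intro t ht
    simp only [tcs, Finset.mem_erase, Finset.mem_filter, Finset.mem_univ, true_and] at ht ⊢
    have hat : a ∉ t := by
      intro hat
      have h1 := ht.deg hat
      rw [degIn_insert D _ he] at h1
      have h2 := hcover a
      simp at h1
      omega
    exact ⟨fun h => hat (h ▸ hd1), ht.restrict hat⟩
  have h1 := Finset.card_le_card hsub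
  have hmem : ({u, v, w} : Set V) ∈ tcs D := by simpa [tcs] using hT
  have h2 := Finset.card_erase_add_one hmem
  omega

end ECSS
end

section
/- Let G = (V,E) be a finite simple graph, and let C ⊆ E be a triangle-free 2-edge-cover of G. Then there exists a triangle-free 2-matching M ⊆ E of G with |M| ≥ 2|V| − |C|. -/
namespace ECSS

variable {V : Type*}

open Classical in
lemma degIn_eq (F : Finset (Sym2 V)) (v : V) : degIn F v = (F.filter (fun e => v ∈ e)).card := by
  unfold degIn
  rw [← Set.ncard_coe_finset]
  congr 1
  ext e
  simp

lemma IsTriangleComponent.rot {F : Finset (Sym2 V)} {u v w : V}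
    (h : IsTriangleComponent F u v w) : IsTriangleComponent F v w u := by
  obtain ⟨h1, h2, h3, h4, h5, h6, h7⟩ := h
  refine ⟨h3, h1.symm, h2.symm, h6, Sym2.eq_swap ▸ h4, Sym2.eq_swap ▸ h5, ?_⟩
  intro e he hh
  have := h7 e he (by tauto)
  rw [Sym2.eq_swap (a := v) (b := u), Sym2.eq_swap (a := w) (b := u)]
  tauto

open Classical in
lemma step_aux (F : Finset (Sym2 V)) (hl : ∀ e ∈ F, ¬ e.IsDiag) (hF : TriangleFree F)
    (u v w y : V) (he : s(u, y) ∈ F) (ht : IsTriangleComponent (F.erase s(u, y)) u v w) :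
    2 < degIn F u ∧ s(u, v) ∈ F ∧ TriangleFree (F.erase s(u, v)) := by
  obtain ⟨h1, h2, h3, h4, h5, h6, h7⟩ := ht
  have hyu : u ≠ y := fun h => hl _ he (by simp [h])
  have hyv : y ≠ v := by rintro rfl; simp at h4
  have hyw : y ≠ w := by rintro rfl; simp at h5
  have key : ∀ a b, s(a, b) ∈ F → (a = u ∨ a = v ∨ a = w) →
      s(a, b) = s(u, y) ∨ s(a, b) = s(u, v) ∨ s(a, b) = s(u, w) ∨ s(a, b) = s(v, w) := by
    intro a b hab ha
    by_cases hc : s(a, b) = s(u, y)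
    · exact Or.inl hc
    · right
      refine h7 _ (Finset.mem_erase.2 ⟨hc, hab⟩) ?_
      rcases ha with rfl | rfl | rfl <;> simp
  refine ⟨?_, Finset.mem_of_mem_erase h4, ?_⟩
  · rw [degIn_eq, Finset.two_lt_card]
    refine ⟨s(u, y), by simp [he], s(u, v), by simp [Finset.mem_of_mem_erase h4],
      s(u, w), by simp [Finset.mem_of_mem_erase h5], ?_, ?_, ?_⟩
    · intro h; rw [Sym2.congr_right] at h; exact hyv h
    · intro h; rw [Sym2.congr_right] at h; exact hyw h
    · intro h; rw [Sym2.congr_right] at h; exact h3 h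
  · have nov : ∀ q r, ¬ IsTriangleComponent (F.erase s(u, v)) v q r := by
      rintro q r ⟨g1, g2, g3, g4, g5, g6, g7⟩
      simp only [Finset.mem_erase] at g4 g5 g6
      have k1 := key _ _ g4.2 (by simp)
      have k2 := key _ _ g5.2 (by simp)
      have := g4.1
      have := g5.1
      simp only [Sym2.eq_iff, ne_eq] at *
      grind
    have nou : ∀ q r, ¬ IsTriangleComponent (F.erase s(u, v)) u q r := by
      rintro q r ⟨g1, g2, g3, g4, g5, g6, g7⟩
      simp only [Finset.mem_erase] at g4 g5 g6
      have k1 := key _ _ g4.2 (by simp)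
      have k2 := key _ _ g5.2 (by simp)
      have k3 := key q r g6.2
      have k4 := key r q (by rw [Sym2.eq_swap]; exact g6.2)
      have := g4.1
      have := g5.1
      clear g7 h7 key nov
      simp only [Sym2.eq_iff, ne_eq] at *
      grind
    rintro ⟨p, q, r, hp⟩
    by_cases a1 : p = u ∨ p = v
    · rcases a1 with rfl | rfl
      · exact nou _ _ hp
      · exact nov _ _ hp
    by_cases a2 : q = u ∨ q = v
    · rcases a2 with rfl | rfl
      · exact nou _ _ hp.rot
      · exact nov _ _ hp.rot
    by_cases a3 : r = u ∨ r = v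
    · rcases a3 with rfl | rfl
      · exact nou _ _ hp.rot.rot
      · exact nov _ _ hp.rot.rot
    apply hF
    obtain ⟨g1, g2, g3, g4, g5, g6, g7⟩ := hp
    refine ⟨p, q, r, g1, g2, g3, Finset.mem_of_mem_erase g4, Finset.mem_of_mem_erase g5,
      Finset.mem_of_mem_erase g6, ?_⟩
    intro e heF hh
    refine g7 e (Finset.mem_erase.2 ⟨?_, heF⟩) hh
    rintro rfl
    simp only [Sym2.mem_iff] at hh
    tauto

open Classical in
lemma step (F : Finset (Sym2 V)) (hl : ∀ e ∈ F, ¬ e.IsDiag) (hF : TriangleFree F)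
    (z : V) (hz : 2 < degIn F z) :
    ∃ e ∈ F, ∃ x ∈ e, 2 < degIn F x ∧ TriangleFree (F.erase e) := by
  have : (F.filter (fun e => z ∈ e)).Nonempty := by
    rw [← Finset.card_pos, ← degIn_eq]; omega
  obtain ⟨e, he⟩ := this
  rw [Finset.mem_filter] at he
  by_cases ht : TriangleFree (F.erase e)
  · exact ⟨e, he.1, z, he.2, hz, ht⟩
  have main : ∀ u v w, IsTriangleComponent (F.erase e) u v w → u ∈ e →
      ∃ e ∈ F, ∃ x ∈ e, 2 < degIn F x ∧ TriangleFree (F.erase e) := by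
    intro u v w h hu
    obtain ⟨y, rfl⟩ := hu
    obtain ⟨a, b, c⟩ := step_aux F hl hF u v w y he.1 h
    exact ⟨_, b, u, by simp, a, c⟩
  unfold TriangleFree at ht
  push Not at ht
  obtain ⟨u, v, w, h⟩ := ht
  by_cases a1 : u ∈ e
  · exact main _ _ _ h a1
  by_cases a2 : v ∈ e
  · exact main _ _ _ h.rot a2
  by_cases a3 : w ∈ e
  · exact main _ _ _ h.rot.rot a3
  exfalso
  apply hF
  obtain ⟨g1, g2, g3, g4, g5, g6, g7⟩ := h
  refine ⟨u, v, w, g1, g2, g3, Finset.mem_of_mem_erase g4, Finset.mem_of_mem_erase g5,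
    Finset.mem_of_mem_erase g6, ?_⟩
  intro f hf hh
  refine g7 f (Finset.mem_erase.2 ⟨?_, hf⟩) hh
  rintro rfl
  tauto

open Classical in
lemma exists_matching [Fintype V] (n : ℕ) : ∀ F : Finset (Sym2 V), F.card = n →
    (∀ e ∈ F, ¬ e.IsDiag) → TriangleFree F →
    ∃ M ⊆ F, IsTwoMatching M ∧ TriangleFree M ∧ F.card ≤ M.card + ∑ v, (degIn F v - 2) := by
  induction n with
  | zero =>
    intro F hc hl hF
    refine ⟨F, subset_rfl, ?_, hF, by omega⟩
    intro v
    rw [Finset.card_eq_zero] at hc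
    simp [degIn_eq, hc]
  | succ n ih =>
    intro F hc hl hF
    by_cases h2 : IsTwoMatching F
    · exact ⟨F, subset_rfl, h2, hF, by omega⟩
    unfold IsTwoMatching at h2
    push Not at h2
    obtain ⟨z, hz⟩ := h2
    obtain ⟨e, he, x, hx, hd, ht⟩ := step F hl hF z hz
    have hcard := Finset.card_erase_add_one he
    obtain ⟨M, hM, m1, m2, m3⟩ := ih (F.erase e) (by omega)
      (fun f hf => hl f (Finset.mem_of_mem_erase hf)) ht
    refine ⟨M, hM.trans (Finset.erase_subset _ _), m1, m2, ?_⟩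
    have hlt : ∑ v, (degIn (F.erase e) v - 2) < ∑ v, (degIn F v - 2) := by
      apply Finset.sum_lt_sum
      · intro v _
        have : degIn (F.erase e) v ≤ degIn F v := by
          rw [degIn_eq, degIn_eq]
          exact Finset.card_le_card (Finset.filter_subset_filter _ (Finset.erase_subset _ _))
        omega
      · refine ⟨x, Finset.mem_univ _, ?_⟩
        have : degIn (F.erase e) x < degIn F x := by
          rw [degIn_eq, degIn_eq]
          apply Finset.card_lt_card
          rw [Finset.ssubset_iff_of_subset
            (Finset.filter_subset_filter _ (Finset.erase_subset _ _))]
          exact ⟨e, by simp [he, hx], by simp⟩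
        omega
    omega

open Classical in
lemma sum_degIn_le [Fintype V] (F : Finset (Sym2 V)) : ∑ v, degIn F v ≤ 2 * F.card := by
  simp only [degIn_eq]
  have := Finset.sum_card_bipartiteAbove_eq_sum_card_bipartiteBelow
    (s := (Finset.univ : Finset V)) (t := F) (fun v e => v ∈ e)
  unfold Finset.bipartiteAbove Finset.bipartiteBelow at this
  rw [this, mul_comm, ← smul_eq_mul]
  apply Finset.sum_le_card_nsmul
  intro e _
  induction e with
  | _ a b =>
    refine le_trans (Finset.card_le_card (t := {a, b}) ?_) Finset.card_le_two
    intro v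
    simp

/-- If `G` is a finite simple graph and `C ⊆ E(G)` is a
triangle-free 2-edge-cover, then `G` has a triangle-free 2-matching `M ⊆ E(G)`
with `|M| ≥ 2|V| - |C|`. -/
theorem triangleFree_twoMatching_of_twoEdgeCover
    {V : Type*} [Fintype V] (G : SimpleGraph V)
    (C : Finset (Sym2 V)) (hCsub : (C : Set (Sym2 V)) ⊆ G.edgeSet)
    (hC2 : IsTwoEdgeCover C) (hCtf : TriangleFree C) :
    ∃ M : Finset (Sym2 V), (M : Set (Sym2 V)) ⊆ G.edgeSet ∧
      IsTwoMatching M ∧ TriangleFree M ∧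
      2 * Fintype.card V - C.card ≤ M.card := by
  obtain ⟨M, hM, m1, m2, m3⟩ := exists_matching C.card C rfl
    (fun e he => G.not_isDiag_of_mem_edgeSet (hCsub he)) hCtf
  refine ⟨M, fun e he => hCsub (hM he), m1, m2, ?_⟩
  have h1 := sum_degIn_le C
  have h2 : ∑ v, (degIn C v - 2) + 2 * Fintype.card V = ∑ v, degIn C v := by
    have : 2 * Fintype.card V = ∑ _v : V, 2 := by simp [mul_comm]
    rw [this, ← Finset.sum_add_distrib]
    exact Finset.sum_congr rfl fun v _ => Nat.sub_add_cancel (hC2 v)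
  omega

end ECSS
end

section
/- Let G = (V,E) be a finite simple graph, let F ⊆ E be a triangle-free edge set, let vw ∈ F, and suppose T is a triangle 2EC component of F∖{vw}. Then exactly one of v and w belongs to V(T), and that endpoint has exactly 3 incident edges in F (namely the two edges of T incident to it together with vw). -/
namespace ECSS

variable {V : Type*}

theorem aux_side {V : Type*} [DecidableEq V]
    (F : Finset (Sym2 V)) (v w : V) (hvw : s(v, w) ∈ F)
    (a b c : V) (hT : IsTriangleComponent (F.erase s(v, w)) a b c)
    (hv : v = a ∨ v = b ∨ v = c) (hwa : w ≠ a) (hwb : w ≠ b) (hwc : w ≠ c) :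
    degIn F v = 3 ∧
      {e ∈ (F : Set (Sym2 V)) | v ∈ e} =
        {s(v, w)} ∪ {e ∈ ({s(a, b), s(a, c), s(b, c)} : Set (Sym2 V)) | v ∈ e} := by
  obtain ⟨hab, hac, hbc, h1, h2, h3, h⟩ := hT
  have hset : {e ∈ (F : Set (Sym2 V)) | v ∈ e} =
        {s(v, w)} ∪ {e ∈ ({s(a, b), s(a, c), s(b, c)} : Set (Sym2 V)) | v ∈ e} := by
    ext e
    simp only [Set.mem_ofPred_eq, Finset.mem_coe, Set.mem_union, Set.mem_singleton_iff,
      Set.mem_insert_iff]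
    constructor
    · rintro ⟨he, hve⟩
      by_cases he' : e = s(v, w)
      · exact Or.inl he'
      · refine Or.inr ⟨h e (Finset.mem_erase.2 ⟨he', he⟩) ?_, hve⟩
        rcases hv with rfl | rfl | rfl <;> simp [hve]
    · rintro (rfl | ⟨rfl | rfl | rfl, hve⟩)
      · exact ⟨hvw, Sym2.mem_mk_left _ _⟩
      · exact ⟨Finset.mem_of_mem_erase h1, hve⟩
      · exact ⟨Finset.mem_of_mem_erase h2, hve⟩
      · exact ⟨Finset.mem_of_mem_erase h3, hve⟩
  refine ⟨?_, hset⟩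
  have key : ∀ x y : V, x ≠ y → w ≠ x → w ≠ y →
      ({s(v, w), s(v, x), s(v, y)} : Set (Sym2 V)).ncard = 3 := by
    intro x y hxy hx hy
    rw [Set.ncard_eq_three]
    refine ⟨_, _, _, ?_, ?_, ?_, rfl⟩ <;> rw [Ne, Sym2.congr_right] <;> assumption
  unfold degIn
  rw [hset]
  rcases hv with rfl | rfl | rfl
  · rw [← key b c hbc hwb hwc]
    congr 1
    ext e
    simp only [Set.mem_ofPred_eq, Set.mem_union, Set.mem_singleton_iff, Set.mem_insert_iff]
    constructor
    · rintro (rfl | ⟨rfl | rfl | rfl, hve⟩) <;> simp_all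
    · rintro (rfl | rfl | rfl) <;> simp
  · rw [← key a c hac hwa hwc]
    congr 1
    ext e
    simp only [Set.mem_ofPred_eq, Set.mem_union, Set.mem_singleton_iff, Set.mem_insert_iff]
    constructor
    · rintro (rfl | ⟨rfl | rfl | rfl, hve⟩) <;> simp_all
    · rintro (rfl | rfl | rfl) <;> simp
  · rw [← key a b hab hwa hwb]
    congr 1
    ext e
    simp only [Set.mem_ofPred_eq, Set.mem_union, Set.mem_singleton_iff, Set.mem_insert_iff]
    constructor
    · rintro (rfl | ⟨rfl | rfl | rfl, hve⟩) <;> simp_all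
      rcases hve with rfl | rfl <;> simp_all
    · rintro (rfl | rfl | rfl) <;> simp

/-- Let `F ⊆ E(G)` be a triangle-free edge set, let
`vw ∈ F`, and suppose `T` (with vertices `a, b, c`) is a triangle 2EC component of
`F \ {vw}`. Then exactly one of `v` and `w` belongs to `V(T)`, and that endpoint
has exactly 3 incident edges in `F`, namely the two edges of `T` incident to it
together with `vw`. -/
theorem triangle_component_after_removal
    {V : Type*} [DecidableEq V] (G : SimpleGraph V)
    (F : Finset (Sym2 V)) (hFsub : (F : Set (Sym2 V)) ⊆ G.edgeSet)
    (hFtf : TriangleFree F)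
    (v w : V) (hvw : s(v, w) ∈ F)
    (a b c : V) (hT : IsTriangleComponent (F.erase s(v, w)) a b c) :
    (v ∈ ({a, b, c} : Set V) ∧ w ∉ ({a, b, c} : Set V) ∧ degIn F v = 3 ∧
      {e ∈ (F : Set (Sym2 V)) | v ∈ e} =
        {s(v, w)} ∪ {e ∈ ({s(a, b), s(a, c), s(b, c)} : Set (Sym2 V)) | v ∈ e}) ∨
    (w ∈ ({a, b, c} : Set V) ∧ v ∉ ({a, b, c} : Set V) ∧ degIn F w = 3 ∧
      {e ∈ (F : Set (Sym2 V)) | w ∈ e} =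
        {s(v, w)} ∪ {e ∈ ({s(a, b), s(a, c), s(b, c)} : Set (Sym2 V)) | w ∈ e}) := by
  have hne : v ≠ w := by
    have := hFsub hvw
    exact G.ne_of_adj this
  by_cases hv : v = a ∨ v = b ∨ v = c
  · by_cases hw : w = a ∨ w = b ∨ w = c
    · exfalso
      obtain ⟨hab, hac, hbc, h1, h2, h3, h⟩ := hT
      have n1 := Finset.ne_of_mem_erase h1
      have n2 := Finset.ne_of_mem_erase h2
      have n3 := Finset.ne_of_mem_erase h3
      rcases hv with rfl | rfl | rfl <;> rcases hw with rfl | rfl | rfl <;>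
        simp_all [Sym2.eq_swap]
    · left
      push Not at hw
      obtain ⟨k1, k2⟩ := aux_side F v w hvw a b c hT hv hw.1 hw.2.1 hw.2.2
      exact ⟨by simpa using hv, by simpa using hw, k1, k2⟩
  · by_cases hw : w = a ∨ w = b ∨ w = c
    · right
      push Not at hv
      have e : s(v, w) = s(w, v) := Sym2.eq_swap
      rw [e] at hvw hT ⊢
      obtain ⟨k1, k2⟩ := aux_side F w v hvw a b c hT hw hv.1 hv.2.1 hv.2.2
      exact ⟨by simpa using hw, by simpa using hv, k1, k2⟩
    · exfalso
      apply hFtf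
      obtain ⟨hab, hac, hbc, h1, h2, h3, h⟩ := hT
      refine ⟨a, b, c, hab, hac, hbc, Finset.mem_of_mem_erase h1, Finset.mem_of_mem_erase h2,
        Finset.mem_of_mem_erase h3, fun e he hh => h e (Finset.mem_erase.2 ⟨?_, he⟩) hh⟩
      rintro rfl
      simp only [Sym2.mem_iff] at hh
      grind

end ECSS
end

section
/- Let G = (V,E) be a finite simple graph, let F ⊆ E be a triangle-free edge set, let vw ∈ E∖F, and suppose F ∪ {vw} is not triangle-free. Then F ∪ {vw} has a triangle 2EC component T with both v ∈ V(T) and w ∈ V(T), and moreover d_F(v) = d_F(w) = 1. -/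
namespace ECSS

variable {V : Type*}

theorem aux_deg {V : Type*} [DecidableEq V] (F : Finset (Sym2 V)) (v w c : V)
    (hvw : s(v, w) ∉ F) (h : IsTriangleComponent (insert s(v, w) F) v w c) :
    degIn F v = 1 := by
  obtain ⟨h1, h2, h3, h4, h5, h6, h7⟩ := h
  unfold degIn
  rw [Set.ncard_eq_one]
  refine ⟨s(v, c), ?_⟩
  ext e
  simp only [Set.mem_setOf_eq, Finset.mem_coe, Set.mem_singleton_iff]
  constructor
  · rintro ⟨he, hv⟩
    rcases h7 e (Finset.mem_insert_of_mem he) (Or.inl hv) with rfl | rfl | rfl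
    · exact absurd he hvw
    · rfl
    · simp [h1, h2] at hv
  · rintro rfl
    refine ⟨?_, by simp⟩
    rcases Finset.mem_insert.1 h5 with h | h
    · simp at h
      grind
    · exact h

theorem aux_swap {V : Type*} {F : Finset (Sym2 V)} {a b c : V}
    (h : IsTriangleComponent F a b c) : IsTriangleComponent F b a c := by
  obtain ⟨h1, h2, h3, h4, h5, h6, h7⟩ := h
  refine ⟨h1.symm, h3, h2, Sym2.eq_swap ▸ h4, h6, h5, fun e he hh => ?_⟩
  have := h7 e he (by tauto)
  rw [Sym2.eq_swap (a := b) (b := a)]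
  tauto

theorem aux_rot {V : Type*} {F : Finset (Sym2 V)} {a b c : V}
    (h : IsTriangleComponent F a b c) : IsTriangleComponent F a c b := by
  obtain ⟨h1, h2, h3, h4, h5, h6, h7⟩ := h
  refine ⟨h2, h1, h3.symm, h5, h4, Sym2.eq_swap ▸ h6, fun e he hh => ?_⟩
  have := h7 e he (by tauto)
  rw [Sym2.eq_swap (a := c) (b := b)]
  tauto

/-- Let `F ⊆ E(G)` be a triangle-free edge set, let
`vw ∈ E(G) \ F`, and suppose `F ∪ {vw}` is not triangle-free. Then `F ∪ {vw}` has
a triangle 2EC component containing both `v` and `w`, and moreover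
`d_F(v) = d_F(w) = 1`. -/
theorem triangle_component_after_addition
    {V : Type*} [DecidableEq V] (G : SimpleGraph V)
    (F : Finset (Sym2 V)) (hFsub : (F : Set (Sym2 V)) ⊆ G.edgeSet)
    (hFtf : TriangleFree F)
    (v w : V) (hadj : G.Adj v w) (hvw : s(v, w) ∉ F)
    (hnt : ¬ TriangleFree (insert s(v, w) F)) :
    (∃ a b c : V, IsTriangleComponent (insert s(v, w) F) a b c ∧
      v ∈ ({a, b, c} : Set V) ∧ w ∈ ({a, b, c} : Set V)) ∧
    degIn F v = 1 ∧ degIn F w = 1 := by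
  have key : ∃ c, IsTriangleComponent (insert s(v, w) F) v w c := by
    unfold TriangleFree at hnt
    rw [not_not] at hnt
    obtain ⟨a, b, c, h⟩ := hnt
    have h0 := h
    by_cases e1 : s(a, b) = s(v, w)
    · rcases Sym2.eq_iff.1 e1 with ⟨rfl, rfl⟩ | ⟨rfl, rfl⟩
      · exact ⟨c, h⟩
      · exact ⟨c, aux_swap h⟩
    by_cases e2 : s(a, c) = s(v, w)
    · rcases Sym2.eq_iff.1 e2 with ⟨rfl, rfl⟩ | ⟨rfl, rfl⟩
      · exact ⟨b, aux_rot h⟩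
      · exact ⟨b, aux_swap (aux_rot h)⟩
    by_cases e3 : s(b, c) = s(v, w)
    · rcases Sym2.eq_iff.1 e3 with ⟨rfl, rfl⟩ | ⟨rfl, rfl⟩
      · exact ⟨a, aux_rot (aux_swap h)⟩
      · exact ⟨a, aux_swap (aux_rot (aux_swap h))⟩
    obtain ⟨h1, h2, h3, h4, h5, h6, h7⟩ := h0
    exact absurd ⟨a, b, c, h1, h2, h3, Finset.mem_of_mem_insert_of_ne h4 e1,
      Finset.mem_of_mem_insert_of_ne h5 e2, Finset.mem_of_mem_insert_of_ne h6 e3,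
      fun e he => h7 e (Finset.mem_insert_of_mem he)⟩ hFtf
  obtain ⟨c, h⟩ := key
  refine ⟨⟨v, w, c, h, by simp, by simp⟩, aux_deg F v w c hvw h, ?_⟩
  have h' := aux_swap h
  rw [Sym2.eq_swap] at h' hvw
  exact aux_deg F w v c hvw h'

end ECSS
end
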